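/- arXiv:2405.16723 — 3 statements merged into one kernel-verified Lean document; each statement's English description precedes it below -/
import Mathlib

section
/- Let p be a prime, ε ∈ {1, −1}, and r ≥ 0 an integer. If p² − ε·p + 1 = 3^r, then ε = 1, p = 2, and r = 1. -/
/-- The polynomial `x² - x + 1` has a root modulo `3` but none modulo `9`. -/
lemma not_nine_dvd (x : ℤ) : ¬ (9 : ℤ) ∣ x ^ 2 - x + 1 := by
  intro hd
  have key : ∀ y : ZMod 9, y ^ 2 - y + 1 ≠ 0 := by decide
  apply key (x : ZMod 9)
  have := (ZMod.intCast_zmod_eq_zero_iff_dvd (x ^ 2 - x + 1) 9).2 (by exact_mod_cast hd)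
  exact_mod_cast this

theorem stmt2 (p : ℕ) (hp : Nat.Prime p) (ε : ℤ) (hε : ε = 1 ∨ ε = -1) (r : ℕ)
    (h : (p : ℤ) ^ 2 - ε * p + 1 = 3 ^ r) :
    ε = 1 ∧ p = 2 ∧ r = 1 := by
  have h2 : (2 : ℤ) ≤ p := by exact_mod_cast hp.two_le
  -- Since `ε² = 1`, the left side is `x² - x + 1` at `x = ε p`, so `9` does not divide it.
  have hr : r < 2 := by
    by_contra! hr
    apply not_nine_dvd (ε * p)
    have hx : (ε * p) ^ 2 - ε * p + 1 = (3 : ℤ) ^ r := by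
      rw [← h]; rcases hε with rfl | rfl <;> ring
    rw [hx]
    exact pow_dvd_pow (3 : ℤ) hr
  rcases hε with rfl | rfl
  · interval_cases r
    · nlinarith
    · have : (p : ℤ) = 2 := by nlinarith
      exact ⟨rfl, by exact_mod_cast this, rfl⟩
  · interval_cases r <;> nlinarith
end

section
/- Let ℓ and p be odd primes, let ε ∈ {1, −1}, let d ≥ 3 be an odd integer, and let j ≥ 0 be an integer. If 2·ℓ^j = p^d + ε, then p = 3 and ε = −1. -/
/-!
Since `d` is odd, `p ^ d + ε = p ^ d - (-ε) ^ d` is divisible by `p + ε`, which is even; hence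
`p + ε = 2 * ℓ ^ i` for some `i ≤ j`. If `i = 0`, then `p + ε = 2` and the conclusion follows.
If `i ≥ 1`, then `ℓ` divides `p + ε` but not `p`, so lifting the exponent gives
`j = i + v` with `v` the `ℓ`-adic valuation of `d`. Therefore
`p ^ d + ε = (p + ε) * ℓ ^ v ≤ (p + ε) * d`, which is impossible by size (`lt_pow_of_three_le`).
-/

lemma lt_pow_of_three_le (p d : ℕ) (hp : 3 ≤ p) (hd : 3 ≤ d) : d * (p + 1) + 1 < p ^ d := by
  induction d, hd using Nat.le_induction with
  | base => nlinarith [mul_le_mul hp hp (by norm_num) (by lia)]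
  | succ d hd ih =>
    have h1 : 3 * p ^ d ≤ p ^ (d + 1) := by
      rw [pow_succ, mul_comm]
      exact Nat.mul_le_mul_left _ hp
    nlinarith

theorem stmt3 (ℓ p : ℕ) (hℓ : Nat.Prime ℓ) (hℓodd : Odd ℓ) (hp : Nat.Prime p) (hpodd : Odd p)
    (ε : ℤ) (hε : ε = 1 ∨ ε = -1) (d : ℕ) (hd : 3 ≤ d) (hdodd : Odd d) (j : ℕ)
    (h : 2 * (ℓ : ℤ) ^ j = (p : ℤ) ^ d + ε) :
    p = 3 ∧ ε = -1 := by
  have hp3 : 3 ≤ p := by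
    have := hp.two_le
    obtain ⟨k, rfl⟩ := hpodd
    lia
  have hεd : (-ε) ^ d = -ε := by
    rcases hε with rfl | rfl
    · exact hdodd.neg_one_pow
    · simp
  have hsub : (p : ℤ) ^ d - (-ε) ^ d = 2 * (ℓ : ℤ) ^ j := by rw [hεd, h]; ring
  have hdvd : (p : ℤ) - (-ε) ∣ 2 * (ℓ : ℤ) ^ j := hsub ▸ sub_dvd_pow_sub_pow _ _ d
  obtain ⟨q, hq⟩ : ∃ q : ℕ, (p : ℤ) - (-ε) = 2 * (q : ℤ) := by
    obtain ⟨k, rfl⟩ := hpodd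
    rcases hε with rfl | rfl
    · exact ⟨k + 1, by push_cast; ring⟩
    · exact ⟨k, by push_cast; ring⟩
  have hqdvd : q ∣ ℓ ^ j := by
    rw [hq] at hdvd
    exact_mod_cast (mul_dvd_mul_iff_left (two_ne_zero : (2 : ℤ) ≠ 0)).1 hdvd
  obtain ⟨i, -, rfl⟩ := (Nat.dvd_prime_pow hℓ).1 hqdvd
  rcases Nat.eq_zero_or_pos i with rfl | hi
  · rw [pow_zero] at hq
    lia
  exfalso
  have hℓZ : Prime (ℓ : ℤ) := Nat.prime_iff_prime_int.1 hℓ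
  have hℓdvd : (ℓ : ℤ) ∣ (p : ℤ) - (-ε) := by
    rw [hq]
    push_cast
    exact (dvd_pow_self _ hi.ne').mul_left 2
  have hℓp : ¬ (ℓ : ℤ) ∣ (p : ℤ) := fun hc => by
    have h1 : (ℓ : ℤ) ∣ -ε := (dvd_sub_right hc).1 hℓdvd
    apply hℓZ.not_isUnit
    apply isUnit_of_dvd_unit h1
    rcases hε with rfl | rfl <;> simp
  have hℓ2 : ¬ (ℓ : ℤ) ∣ 2 := fun hc => by
    have h1 : ℓ ∣ 2 := by exact_mod_cast hc
    have h2 := (Nat.prime_dvd_prime_iff_eq hℓ Nat.prime_two).1 h1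
    subst h2
    exact absurd hℓodd (by decide)
  have hval (n : ℕ) : emultiplicity (ℓ : ℤ) (2 * (ℓ : ℤ) ^ n) = n := by
    rw [emultiplicity_mul hℓZ, emultiplicity_eq_zero.2 hℓ2, zero_add,
      emultiplicity_pow_self hℓZ.ne_zero hℓZ.not_isUnit]
  have hlte := Int.emultiplicity_pow_sub_pow hℓ hℓodd hℓdvd hℓp d
  rw [hsub, hq, Nat.cast_pow, hval, hval] at hlte
  have hij : i ≤ j := by
    have : (i : ℕ∞) ≤ j := hlte ▸ le_self_add
    exact_mod_cast this
  obtain ⟨v, rfl⟩ := Nat.exists_eq_add_of_le hij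
  have hv : (v : ℕ∞) ≤ emultiplicity ℓ d := by
    rw [Nat.cast_add] at hlte
    exact (ENat.add_le_add_iff_left (ENat.natCast_ne_top i)).1 hlte.le
  have hvd : ℓ ^ v ≤ d := Nat.le_of_dvd (by lia) (pow_dvd_of_le_emultiplicity hv)
  have hvdZ : (ℓ : ℤ) ^ v ≤ d := by exact_mod_cast hvd
  have hprod : (p : ℤ) ^ d + ε = ((p : ℤ) + ε) * (ℓ : ℤ) ^ v := by
    have h2 : (p : ℤ) + ε = 2 * (ℓ : ℤ) ^ i := by
      push_cast at hq
      linarith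
    rw [← h, h2, pow_add]
    ring
  have hsize : (d : ℤ) * (p + 1) + 1 < (p : ℤ) ^ d := by
    exact_mod_cast lt_pow_of_three_le p d hp3 hd
  have hle : ((p : ℤ) + ε) * (ℓ : ℤ) ^ v ≤ (p + 1) * d :=
    mul_le_mul (by lia) hvdZ (by positivity) (by positivity)
  rcases hε with rfl | rfl <;> linarith
end

section
/- Let ℓ and p be odd primes, let ε ∈ {1, −1}, let d ≥ 3 be an odd integer, and let j ≥ 0 be an integer. If 8·ℓ^j = p^d + ε, then p = 7 and ε = 1. -/
/-!
Put `y = -ε p`, so that `y ^ d - 1 = -ε (p ^ d + ε)` and `y - 1 = -ε (p + ε)` because `d` is odd.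
Since `p ^ 2 ≡ 1 [ZMOD 8]`, also `p ^ d ≡ p`, so `8 ∣ p + ε`; as `p + ε` divides
`p ^ d + ε = 8 ℓ ^ j`, this forces `p + ε = 8 ℓ ^ a` for some `a`.

If `a = 0`, then `p + ε = 8`, so `p = 7` and `ε = 1` (`p = 9` is not prime). If `a > 0`, then
`ℓ ∣ y - 1`, and lifting the exponent says that `ℓ` occurs in `y ^ d - 1` exactly as often as in
`(y - 1) d`. Hence `ℓ ^ j ∣ ℓ ^ a d`, so `p ^ d + ε ≤ (p + ε) d`, which is impossible for
`p, d ≥ 3`.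
-/

/-- The growth estimate that excludes `p ^ d + ε ≤ (p + ε) d`. -/
lemma mul_add_lt_pow_add {p ε : ℤ} (hp : 3 ≤ p) (hε : ε = 1 ∨ ε = -1) {d : ℕ} (hd : 3 ≤ d) :
    (p + ε) * d < p ^ d + ε := by
  obtain ⟨k, rfl⟩ : ∃ k, d = k + 1 := ⟨d - 1, by omega⟩
  have hb : 1 + (k : ℤ) * (p - 1) ≤ p ^ k := by
    have := one_add_mul_le_pow (a := p - 1) (by linarith) k
    simpa using this
  have hk : (2 : ℤ) ≤ k := by exact_mod_cast (by omega : 2 ≤ k)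
  -- Bernoulli on `p ^ k` with `k = d - 1 ≥ 2` and `p - 1 ≥ 2` is already strong enough.
  have h2 : (1 + (k : ℤ) * 2) * p ≤ p ^ k * p := by
    apply mul_le_mul_of_nonneg_right _ (by linarith)
    nlinarith
  rw [pow_succ]
  push_cast
  rcases hε with rfl | rfl <;> nlinarith

theorem stmt4 (ℓ p : ℕ) (hℓ : Nat.Prime ℓ) (hℓodd : Odd ℓ) (hp : Nat.Prime p) (hpodd : Odd p)
    (ε : ℤ) (hε : ε = 1 ∨ ε = -1) (d : ℕ) (hd : 3 ≤ d) (hdodd : Odd d) (j : ℕ)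
    (h : 8 * (ℓ : ℤ) ^ j = (p : ℤ) ^ d + ε) :
    p = 7 ∧ ε = 1 := by
  have hp3 : 3 ≤ p := by
    have := hp.two_le
    obtain ⟨k, rfl⟩ := hpodd
    omega
  have hp3' : (3 : ℤ) ≤ p := by exact_mod_cast hp3
  have hlt := mul_add_lt_pow_add hp3' hε hd
  have hε2 : ε * ε = 1 := by rcases hε with rfl | rfl <;> norm_num
  have hεd : (-ε) ^ d = -ε := by rcases hε with rfl | rfl <;> simp [hdodd.neg_one_pow]
  have hy : (-ε * p) ^ d - 1 = -ε * (8 * (ℓ : ℤ) ^ j) := by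
    rw [mul_pow, hεd, h]; linear_combination hε2
  have hy1 : -ε * p - 1 = -ε * (p + ε) := by linear_combination hε2
  have hunit : IsUnit (-ε) := by rcases hε with rfl | rfl <;> simp
  have hdvd : (p : ℤ) + ε ∣ 8 * (ℓ : ℤ) ^ j := by
    have := sub_dvd_pow_sub_pow (-ε * (p : ℤ)) 1 d
    rw [one_pow, hy, hy1] at this
    exact (hunit.dvd_mul_left.mp (hunit.mul_left_dvd.mp this))
  have h8 : (8 : ℤ) ∣ p + ε := by
    have hsq : (p : ℤ) ^ 2 ≡ 1 [ZMOD 8] :=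
      (Int.modEq_iff_dvd.mpr (Int.eight_dvd_sq_sub_one_of_odd (by exact_mod_cast hpodd))).symm
    obtain ⟨k, rfl⟩ := hdodd
    have h1 : (p : ℤ) ^ (2 * k + 1) ≡ p [ZMOD 8] := by
      rw [pow_succ, pow_mul]
      simpa using (hsq.pow k).mul_right (p : ℤ)
    have h2 := h1.dvd
    have h3 : (8 : ℤ) ∣ (p : ℤ) ^ (2 * k + 1) + ε := ⟨_, h.symm⟩
    have h4 := dvd_add h2 h3
    rwa [← add_assoc, sub_add_cancel] at h4
  obtain ⟨m, hm⟩ := h8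
  rw [hm] at hdvd
  have hmdvd : m ∣ (ℓ : ℤ) ^ j := (mul_dvd_mul_iff_left (by norm_num)).mp hdvd
  have hmpos : 0 ≤ m := by rcases hε with rfl | rfl <;> omega
  lift m to ℕ using hmpos
  obtain ⟨a, -, rfl⟩ := (Nat.dvd_prime_pow hℓ).mp (by exact_mod_cast hmdvd)
  rcases Nat.eq_zero_or_pos a with rfl | ha
  · rcases hε with rfl | rfl
    · refine ⟨?_, rfl⟩
      simp at hm
      omega
    · have : p = 9 := by
        simp at hm
        omega
      subst this
      norm_num at hp
  · exfalso
    have hℓy : (ℓ : ℤ) ∣ -ε * p - 1 := by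
      rw [hy1, hm]
      push_cast
      exact ((dvd_pow_self _ ha.ne').mul_left _).mul_left _
    have hℓny : ¬ (ℓ : ℤ) ∣ -ε * p := fun hc => by
      have h1 : (ℓ : ℤ) ∣ 1 := (dvd_sub_right hc).mp hℓy
      exact hℓ.one_lt.ne' (by exact_mod_cast Int.eq_one_of_dvd_one (by positivity) h1)
    have hlte := Int.emultiplicity_pow_sub_pow hℓ hℓodd hℓy hℓny d
    have hprime : Prime (ℓ : ℤ) := Nat.prime_iff_prime_int.mp hℓ
    rw [← Int.natCast_emultiplicity ℓ d, ← emultiplicity_mul hprime, one_pow, hy, hy1, hm] at hlte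
    have hj : (ℓ : ℤ) ^ j ∣ -ε * (8 * ((ℓ ^ a : ℕ) : ℤ)) * d := by
      rw [pow_dvd_iff_le_emultiplicity, ← hlte, ← pow_dvd_iff_le_emultiplicity]
      exact (dvd_mul_left _ _).mul_left _
    have hcop : IsCoprime ((ℓ : ℤ) ^ j) 8 := by
      have : Nat.Coprime (ℓ ^ j) (2 ^ 3) := (hℓodd.coprime_two_right.pow _ _)
      exact_mod_cast Nat.isCoprime_iff_coprime.mpr this
    have hj' : (ℓ : ℤ) ^ j ∣ ((ℓ ^ a : ℕ) : ℤ) * d := by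
      rw [mul_assoc, hunit.dvd_mul_left, mul_assoc] at hj
      exact hcop.dvd_of_dvd_mul_left hj
    have hle := Int.le_of_dvd (by have := hℓ.pos; positivity) hj'
    rw [hm, ← h] at hlt
    linarith
end
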